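/- The traceless parts of the matrices K^μ satisfy Σ_ν L^ν · L_ν = −3·I, where the sum runs over ν ∈ {0,1,2,3}. -/

import Mathlib

open Matrix BigOperators

noncomputable section

/-- The Pauli basis of `Mat(2,ℂ)`: `σ^0 = I`, `σ^1, σ^2, σ^3` the Pauli matrices. -/
def σm : Fin 4 → Matrix (Fin 2) (Fin 2) ℂ :=
  ![1, !![0, 1; 1, 0], !![0, -Complex.I; Complex.I, 0], !![1, 0; 0, -1]]

/-- The Minkowski matrix `η = diag(1,-1,-1,-1)`. -/
def ηm : Fin 4 → Fin 4 → ℝ := fun a b => if a = b then (if a = 0 then 1 else -1) else 0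

/-- Lowered-index Pauli matrices `σ_a := Σ_b η_{ab} σ^b`. -/
def σd (a : Fin 4) : Matrix (Fin 2) (Fin 2) ℂ := ∑ b, ηm a b • σm b

/-- The conjugate matrix `M̃ := (tr M)·I − M`. -/
def mtilde (M : Matrix (Fin 2) (Fin 2) ℂ) : Matrix (Fin 2) (Fin 2) ℂ :=
  M.trace • (1 : Matrix (Fin 2) (Fin 2) ℂ) - M

/-- The contravariant metric `g^{μν} := Σ_{a,b} y^μ_a y^ν_b η^{ab}` built from a tetrad `y`. -/
def gUp (y : Matrix (Fin 4) (Fin 4) ℝ) : Matrix (Fin 4) (Fin 4) ℝ :=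
  Matrix.of fun μ ν => ∑ a, ∑ b, y μ a * y ν b * ηm a b

/-- The covariant metric `g_{μν}`, the inverse matrix of `(g^{μν})`. -/
def gDown (y : Matrix (Fin 4) (Fin 4) ℝ) : Matrix (Fin 4) (Fin 4) ℝ := (gUp y)⁻¹

/-- `K^μ := Σ_a y^μ_a σ^a ∈ Mat(2,ℂ)`. -/
def K (y : Matrix (Fin 4) (Fin 4) ℝ) (μ : Fin 4) : Matrix (Fin 2) (Fin 2) ℂ :=
  ∑ a, y μ a • σm a

/-- `K_μ := Σ_ν g_{μν} K^ν`. -/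
def Kd (y : Matrix (Fin 4) (Fin 4) ℝ) (μ : Fin 4) : Matrix (Fin 2) (Fin 2) ℂ :=
  ∑ ν, gDown y μ ν • K y ν

/-- `L^μ := K^μ − τ^μ·I`, the traceless part of `K^μ`, where `τ^μ := y^μ_0`. -/
def Lm (y : Matrix (Fin 4) (Fin 4) ℝ) (μ : Fin 4) : Matrix (Fin 2) (Fin 2) ℂ :=
  K y μ - (y μ 0 : ℂ) • (1 : Matrix (Fin 2) (Fin 2) ℂ)

/-- `L_μ := Σ_ν g_{μν} L^ν`. -/
def Ld (y : Matrix (Fin 4) (Fin 4) ℝ) (μ : Fin 4) : Matrix (Fin 2) (Fin 2) ℂ :=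
  ∑ ν, gDown y μ ν • Lm y ν

def sSp : Fin 4 → Matrix (Fin 2) (Fin 2) ℂ :=
  ![0, !![0, 1; 1, 0], !![0, -Complex.I; Complex.I, 0], !![1, 0; 0, -1]]

lemma Lm_eq (y : Matrix (Fin 4) (Fin 4) ℝ) (μ : Fin 4) : Lm y μ = ∑ a, y μ a • sSp a := by
  unfold Lm K
  have h : ((y μ 0 : ℂ) • (1 : Matrix (Fin 2) (Fin 2) ℂ)) = y μ 0 • 1 := by
    ext i j; simp
  rw [h]
  simp only [Fin.sum_univ_four, σm, sSp, Matrix.cons_val]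
  rw [smul_zero, zero_add, add_assoc, add_assoc, add_assoc, add_sub_cancel_left]

lemma gUp_eq (y : Matrix (Fin 4) (Fin 4) ℝ) : gUp y = y * Matrix.of ηm * yᵀ := by
  ext μ ν
  simp only [gUp, Matrix.mul_apply, Matrix.of_apply, Matrix.transpose_apply, Finset.sum_mul]
  rw [Finset.sum_comm]
  refine Finset.sum_congr rfl fun a _ => Finset.sum_congr rfl fun b _ => by ring

lemma eta_sq : (Matrix.of ηm) * (Matrix.of ηm) = 1 := by
  ext a b
  fin_cases a <;> fin_cases b <;> simp [Matrix.mul_apply, Fin.sum_univ_four, ηm]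

lemma key (y : Matrix (Fin 4) (Fin 4) ℝ) (hy : IsUnit y.det) :
    yᵀ * gDown y * y = Matrix.of ηm := by
  have hyt : IsUnit yᵀ.det := by rwa [Matrix.det_transpose]
  rw [gDown, gUp_eq, Matrix.mul_inv_rev, Matrix.mul_inv_rev, Matrix.inv_eq_left_inv eta_sq,
    ← Matrix.mul_assoc, Matrix.mul_nonsing_inv _ hyt, Matrix.one_mul, Matrix.mul_assoc,
    Matrix.nonsing_inv_mul _ hy, Matrix.mul_one]

lemma expand (y : Matrix (Fin 4) (Fin 4) ℝ) :
    (∑ ν, Lm y ν * Ld y ν) = ∑ a, ∑ b, (yᵀ * gDown y * y) a b • (sSp a * sSp b) := by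
  have h1 : (∑ ν, Lm y ν * Ld y ν) =
      ∑ ν, ∑ a, ∑ μ, ∑ b, (y ν a * gDown y ν μ * y μ b) • (sSp a * sSp b) := by
    refine Finset.sum_congr rfl fun ν _ => ?_
    simp only [Ld, Lm_eq]
    rw [Finset.sum_mul]
    refine Finset.sum_congr rfl fun a _ => ?_
    rw [Finset.mul_sum]
    refine Finset.sum_congr rfl fun μ _ => ?_
    rw [Finset.smul_sum, Finset.mul_sum]
    refine Finset.sum_congr rfl fun b _ => ?_
    rw [smul_mul_assoc, mul_smul_comm, mul_smul_comm, smul_smul, smul_smul, mul_assoc]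
  rw [h1, Finset.sum_comm]
  refine Finset.sum_congr rfl fun a _ => ?_
  rw [Finset.sum_congr rfl fun ν _ => Finset.sum_comm, Finset.sum_comm]
  refine Finset.sum_congr rfl fun b _ => ?_
  rw [Finset.sum_comm, Matrix.mul_apply, Finset.sum_smul]
  refine Finset.sum_congr rfl fun μ _ => ?_
  rw [Matrix.mul_apply, Finset.sum_mul, Finset.sum_smul]
  rfl

/-- `Σ_ν L^ν L_ν = −3 I` for the traceless parts `L^ν` of `K^ν`. -/
theorem L_contraction (y : Matrix (Fin 4) (Fin 4) ℝ) (hy : IsUnit y.det) :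
    (∑ ν, Lm y ν * Ld y ν) = (-3 : ℂ) • (1 : Matrix (Fin 2) (Fin 2) ℂ) := by
  rw [expand, key y hy]
  ext i j
  fin_cases i <;> fin_cases j <;>
    simp [Fin.sum_univ_four, ηm, sSp, Matrix.mul_apply] <;> norm_num
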